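/- Let γ(t) = (t,t²,t³) and let T : ℝ³ → ℝ³ be the linear map T(x,y,z) = (y/2, (x − z/6)/√2, (x + z/6)/√2). There is a universal constant K ≥ 1 such that the following holds. Let ρ ≥ 1 be an integer, let 0 ≤ l < ρ be an integer, set t = l/ρ, define ω ∈ [π/4, π/2] by (cos ω, sin ω) = (2√2 t/(2 + t²), (2 − t²)/(2 + t²)), and set u = (cos ω, sin ω, 1), v = (sin ω, −cos ω, 0), w = (cos ω, sin ω, −1). Let τ be the l-th canonical moment curve block at scale ρ, let c ≥ 1, and let r > 0 satisfy K c ρ^{−3} ≤ r^{−1}/4. Then T(cτ − cτ) ∩ {(ξ₁,ξ₂,ξ₃) : r^{−1}/2 ≤ ξ₃ ≤ r^{−1}} ⊆ {A' u + B' v + C' w : r^{−1}/4 ≤ A' ≤ 2 r^{−1}, |B'| ≤ K c ρ^{−2}, |C'| ≤ K c ρ^{−3}}. -/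

import Mathlib

open Real Set MeasureTheory
open scoped Pointwise

noncomputable section

/-- The `l`-th canonical moment curve block at scale `ρ`. -/
def canBlock (ρ l : ℕ) : Set (Fin 3 → ℝ) :=
  {ξ | (l : ℝ) / ρ ≤ ξ 0 ∧ ξ 0 < ((l : ℝ) + 1) / ρ ∧
       |ξ 1 - (ξ 0)^2| ≤ ((ρ:ℝ)⁻¹)^2 ∧
       |ξ 2 - 3*(ξ 0)*(ξ 1) + 2*(ξ 0)^3| ≤ ((ρ:ℝ)⁻¹)^3}

/-- The centroid (center of mass) of a set `A ⊆ ℝ³`. -/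
def ctr (A : Set (Fin 3 → ℝ)) : Fin 3 → ℝ :=
  (volume A).toReal⁻¹ • ∫ x in A, x

/-- The dilate of `A` by the factor `c` about its centroid. -/
def dilate (c : ℝ) (A : Set (Fin 3 → ℝ)) : Set (Fin 3 → ℝ) :=
  (fun x => ctr A + c • (x - ctr A)) '' A

/-- The linear map `T(x,y,z) = (y/2, (x − z/6)/√2, (x + z/6)/√2)`. -/
def Tmap (x : Fin 3 → ℝ) : Fin 3 → ℝ :=
  ![x 1 / 2, (x 0 - x 2 / 6) / Real.sqrt 2, (x 0 + x 2 / 6) / Real.sqrt 2]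

/-! Taylor expansion of the moment curve `γ` at `t` shows that every difference of two points of
the block at `t` is a combination of `γ′(t)`, `γ″(t) / 2`, `γ‴(t) / 6` whose last two coefficients
are `O(δ²)` and `O(δ³)`. The map `T` sends this flag to the flag of the cone frame at `ω`: `T γ′(t)`
is a multiple of `u`, and `T γ″(t)` lies in the span of `u` and `v`. So the `v`-coefficient of the
image sees only the last two coefficients and the `w`-coefficient only the last one. The slab
controls the `u`-coefficient, because the third coordinate of `A u + B v + C w` is `A - C`. -/

/-- The moment curve `γ(t) = (t, t², t³)`. -/
def momentCurve (t : ℝ) : Fin 3 → ℝ := ![t, t ^ 2, t ^ 3]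

/-- The tangent vector `γ′(t)` of the moment curve. -/
def momentTangent (t : ℝ) : Fin 3 → ℝ := ![1, 2 * t, 3 * t ^ 2]

/-- The second Taylor coefficient `γ″(t) / 2` of the moment curve. -/
def momentNormal (t : ℝ) : Fin 3 → ℝ := ![0, 1, 3 * t]

/-- The third Taylor coefficient `γ‴(t) / 6` of the moment curve, which does not depend on `t`. -/
def momentBinormal : Fin 3 → ℝ := ![0, 0, 1]

/-- The anisotropic neighborhood of the arc of the moment curve over `[t, t + δ)`: a canonical
block with an arbitrary real base point `t` and width `δ` in place of `l / ρ` and `ρ⁻¹`. -/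
def momentBlock (t δ : ℝ) : Set (Fin 3 → ℝ) :=
  {ξ | t ≤ ξ 0 ∧ ξ 0 < t + δ ∧ |ξ 1 - ξ 0 ^ 2| ≤ δ ^ 2 ∧
    |ξ 2 - 3 * ξ 0 * ξ 1 + 2 * ξ 0 ^ 3| ≤ δ ^ 3}

/-- `ω` is the angle of the light ray spanned by `T γ′(t)`. -/
def IsConeAngle (t ω : ℝ) : Prop :=
  cos ω = 2 * √2 * t / (2 + t ^ 2) ∧ sin ω = (2 - t ^ 2) / (2 + t ^ 2)

/-- The frame vector `u`, spanning the light ray at angle `ω`. -/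
def coneU (ω : ℝ) : Fin 3 → ℝ := ![cos ω, sin ω, 1]

/-- The frame vector `v`, tangent to the light cone and orthogonal to the light ray at `ω`. -/
def coneV (ω : ℝ) : Fin 3 → ℝ := ![sin ω, -cos ω, 0]

/-- The frame vector `w`, normal to the light cone along the light ray at `ω`. -/
def coneW (ω : ℝ) : Fin 3 → ℝ := ![cos ω, sin ω, -1]

/-- The cone block at angle `ω` and height comparable to `h`, with half-widths `b` in the
direction `v` and `k` in the direction `w`. -/
def coneBlock (ω h b k : ℝ) : Set (Fin 3 → ℝ) :=
  {ξ | ∃ A B C : ℝ, h / 4 ≤ A ∧ A ≤ 2 * h ∧ |B| ≤ b ∧ |C| ≤ k ∧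
    ξ = A • coneU ω + B • coneV ω + C • coneW ω}

theorem canBlock_eq_momentBlock (ρ l : ℕ) : canBlock ρ l = momentBlock (l / ρ) (ρ : ℝ)⁻¹ := by
  simp only [canBlock, momentBlock, add_div, one_div]

theorem dilate_sub_dilate (c : ℝ) (A : Set (Fin 3 → ℝ)) :
    dilate c A - dilate c A = c • (A - A) := by
  have image_sub (x y : Fin 3 → ℝ) :
      ctr A + c • (x - ctr A) - (ctr A + c • (y - ctr A)) = c • (x - y) := by module
  ext z
  simp only [dilate, mem_sub, mem_smul_set, exists_mem_image, image_sub]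
  grind

theorem Tmap_add (x y : Fin 3 → ℝ) : Tmap (x + y) = Tmap x + Tmap y := by
  simp only [Tmap, Pi.add_apply, Matrix.vec3_add]
  exact Matrix.vec3_eq (by ring) (by ring) (by ring)

theorem Tmap_smul (a : ℝ) (x : Fin 3 → ℝ) : Tmap (a • x) = a • Tmap x := by
  simp only [Tmap, Pi.smul_apply, Matrix.smul_vec3, smul_eq_mul]
  exact Matrix.vec3_eq (by ring) (by ring) (by ring)

theorem eq_momentCurve_add_frame (t : ℝ) (ξ : Fin 3 → ℝ) :
    ξ = momentCurve t + (ξ 0 - t) • momentTangent t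
      + ((ξ 0 - t) ^ 2 + (ξ 1 - ξ 0 ^ 2)) • momentNormal t
      + ((ξ 0 - t) ^ 3 + 3 * ((ξ 0 - t) * (ξ 1 - ξ 0 ^ 2))
          + (ξ 2 - 3 * ξ 0 * ξ 1 + 2 * ξ 0 ^ 3)) • momentBinormal := by
  simp only [momentCurve, momentTangent, momentNormal, momentBinormal, Matrix.smul_vec3,
    Matrix.vec3_add, smul_eq_mul]
  ext i
  fin_cases i <;> simp only [Fin.zero_eta, Fin.mk_one, Fin.reduceFinMk, Matrix.cons_val] <;> ring

theorem exists_frame_coeffs_of_mem_momentBlock {t δ : ℝ} {ξ : Fin 3 → ℝ}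
    (hξ : ξ ∈ momentBlock t δ) :
    ∃ a b k : ℝ, |b| ≤ 2 * δ ^ 2 ∧ |k| ≤ 5 * δ ^ 3 ∧
      ξ = momentCurve t + a • momentTangent t + b • momentNormal t + k • momentBinormal := by
  obtain ⟨ht, htδ, hp, hq⟩ := hξ
  refine ⟨_, _, _, ?_, ?_, eq_momentCurve_add_frame t ξ⟩
  all_goals
    set a := ξ 0 - t
    set p := ξ 1 - ξ 0 ^ 2
    have ha : |a| ≤ δ := abs_le.2 ⟨by linarith, by linarith⟩
  · calc |a ^ 2 + p| ≤ |a| ^ 2 + |p| := by rw [← abs_pow]; exact abs_add_le _ _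
      _ ≤ δ ^ 2 + δ ^ 2 := by gcongr
      _ = 2 * δ ^ 2 := by ring
  · set q := ξ 2 - 3 * ξ 0 * ξ 1 + 2 * ξ 0 ^ 3
    have hδ : 0 ≤ δ := (abs_nonneg a).trans ha
    calc |a ^ 3 + 3 * (a * p) + q| ≤ |a ^ 3| + |3 * (a * p)| + |q| := abs_add_three _ _ _
      _ = |a| ^ 3 + 3 * (|a| * |p|) + |q| := by simp only [abs_pow, abs_mul, Nat.abs_ofNat]
      _ ≤ δ ^ 3 + 3 * (δ * δ ^ 2) + δ ^ 3 := by gcongr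
      _ = 5 * δ ^ 3 := by ring

theorem exists_frame_coeffs_sub_of_mem_momentBlock {t δ : ℝ} {x y : Fin 3 → ℝ}
    (hx : x ∈ momentBlock t δ) (hy : y ∈ momentBlock t δ) :
    ∃ α β κ : ℝ, |β| ≤ 4 * δ ^ 2 ∧ |κ| ≤ 10 * δ ^ 3 ∧
      x - y = α • momentTangent t + β • momentNormal t + κ • momentBinormal := by
  obtain ⟨a, b, k, hb, hk, hx⟩ := exists_frame_coeffs_of_mem_momentBlock hx
  obtain ⟨a', b', k', hb', hk', hy⟩ := exists_frame_coeffs_of_mem_momentBlock hy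
  refine ⟨a - a', b - b', k - k', (abs_sub _ _).trans ?_, (abs_sub _ _).trans ?_, ?_⟩
  · linarith
  · linarith
  · rw [hx, hy]; module

theorem abs_div_three_mul_two_add_sq_le (t : ℝ) : |t / (3 * (2 + t ^ 2))| ≤ 1 / 6 := by
  rw [abs_div, abs_of_pos (by positivity : 0 < 3 * (2 + t ^ 2)), div_le_iff₀ (by positivity)]
  nlinarith [sq_nonneg (|t| - 1), sq_abs t]

theorem abs_inv_three_mul_sqrt_two_mul_two_add_sq_le (t : ℝ) :
    |(3 * √2 * (2 + t ^ 2))⁻¹| ≤ 1 / 6 := by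
  have hsqrt : 1 ≤ √2 := one_le_sqrt.2 one_le_two
  rw [abs_of_pos (by positivity), ← one_div]
  gcongr
  nlinarith [sq_nonneg t]

theorem Tmap_momentTangent {t ω : ℝ} (hω : IsConeAngle t ω) :
    Tmap (momentTangent t) = ((2 + t ^ 2) / (2 * √2)) • coneU ω := by
  obtain ⟨hcos, hsin⟩ := hω
  simp only [Tmap, momentTangent, coneU, hcos, hsin, Matrix.cons_val, Matrix.smul_vec3, smul_eq_mul]
  apply Matrix.vec3_eq <;> field_simp <;> ring

theorem Tmap_momentNormal {t ω : ℝ} (hω : IsConeAngle t ω) :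
    Tmap (momentNormal t) = (t / (2 * √2)) • coneU ω + (1 / 2 : ℝ) • coneV ω := by
  obtain ⟨hcos, hsin⟩ := hω
  simp only [Tmap, momentNormal, coneU, coneV, hcos, hsin, Matrix.cons_val, Matrix.smul_vec3,
    Matrix.vec3_add, smul_eq_mul]
  refine Matrix.vec3_eq ?_ ?_ ?_
  · field_simp; ring
  · field_simp; rw [sq_sqrt zero_le_two]; ring
  · field_simp; ring

theorem Tmap_momentBinormal {t ω : ℝ} (hω : IsConeAngle t ω) :
    Tmap momentBinormal = (t ^ 2 / (6 * √2 * (2 + t ^ 2))) • coneU ω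
      + (t / (3 * (2 + t ^ 2))) • coneV ω + (-(3 * √2 * (2 + t ^ 2))⁻¹) • coneW ω := by
  obtain ⟨hcos, hsin⟩ := hω
  simp only [Tmap, momentBinormal, coneU, coneV, coneW, hcos, hsin, Matrix.cons_val,
    Matrix.smul_vec3, Matrix.vec3_add, smul_eq_mul]
  refine Matrix.vec3_eq ?_ ?_ ?_
  · field_simp; ring
  · field_simp; rw [sq_sqrt zero_le_two]; ring
  · field_simp; ring

theorem exists_Tmap_sub_eq_of_mem_momentBlock {t δ ω : ℝ} {x y : Fin 3 → ℝ}
    (hω : IsConeAngle t ω) (hδ : δ ≤ 1) (hx : x ∈ momentBlock t δ) (hy : y ∈ momentBlock t δ) :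
    ∃ A B C : ℝ, |B| ≤ 4 * δ ^ 2 ∧ |C| ≤ 4 * δ ^ 3 ∧
      Tmap (x - y) = A • coneU ω + B • coneV ω + C • coneW ω := by
  obtain ⟨α, β, κ, hβ, hκ, hxy⟩ := exists_frame_coeffs_sub_of_mem_momentBlock hx hy
  have hδ₀ : 0 ≤ δ := by linarith [hx.1, hx.2.1]
  have hcube : δ ^ 3 ≤ δ ^ 2 := pow_le_pow_of_le_one hδ₀ hδ (by norm_num)
  refine ⟨α * ((2 + t ^ 2) / (2 * √2)) + β * (t / (2 * √2))
      + κ * (t ^ 2 / (6 * √2 * (2 + t ^ 2))),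
    β * (1 / 2) + κ * (t / (3 * (2 + t ^ 2))), -(κ * (3 * √2 * (2 + t ^ 2))⁻¹), ?_, ?_, ?_⟩
  · calc |β * (1 / 2) + κ * (t / (3 * (2 + t ^ 2)))|
        ≤ |β| * (1 / 2) + |κ| * |t / (3 * (2 + t ^ 2))| := by
          refine (abs_add_le _ _).trans_eq ?_
          rw [abs_mul, abs_mul, abs_of_pos (one_half_pos (α := ℝ))]
      _ ≤ 4 * δ ^ 2 * (1 / 2) + 10 * δ ^ 3 * (1 / 6) := by
          gcongr
          exact abs_div_three_mul_two_add_sq_le t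
      _ ≤ 4 * δ ^ 2 := by linarith [sq_nonneg δ]
  · calc |-(κ * (3 * √2 * (2 + t ^ 2))⁻¹)| = |κ| * |(3 * √2 * (2 + t ^ 2))⁻¹| := by
          rw [abs_neg, abs_mul]
      _ ≤ 10 * δ ^ 3 * (1 / 6) := by
          gcongr
          exact abs_inv_three_mul_sqrt_two_mul_two_add_sq_le t
      _ ≤ 4 * δ ^ 3 := by linarith [pow_nonneg hδ₀ 3]
  · rw [hxy]
    simp only [Tmap_add, Tmap_smul, Tmap_momentTangent hω, Tmap_momentNormal hω,
      Tmap_momentBinormal hω]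
    module

theorem mem_coneBlock_of_mem_slab {ω h b k A B C : ℝ} (hB : |B| ≤ b) (hC : |C| ≤ k)
    (hk : k ≤ h / 4)
    (hslab : A • coneU ω + B • coneV ω + C • coneW ω ∈ {ξ : Fin 3 → ℝ | h / 2 ≤ ξ 2 ∧ ξ 2 ≤ h}) :
    A • coneU ω + B • coneV ω + C • coneW ω ∈ coneBlock ω h b k := by
  have hthird : (A • coneU ω + B • coneV ω + C • coneW ω) 2 = A - C := by
    simp [coneU, coneV, coneW, sub_eq_add_neg]
  obtain ⟨hlow, hhigh⟩ := hslab
  rw [hthird] at hlow hhigh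
  obtain ⟨hC₁, hC₂⟩ := abs_le.1 (hC.trans hk)
  exact ⟨A, B, C, by linarith, by linarith, hB, hC, rfl⟩

theorem canonical_block_to_cone_block_general {t δ ω c h : ℝ} (hω : IsConeAngle t ω) (hδ : δ ≤ 1)
    (hc : 0 ≤ c) (hh : 4 * c * δ ^ 3 ≤ h / 4) :
    (Tmap '' (dilate c (momentBlock t δ) - dilate c (momentBlock t δ))) ∩
        {ξ : Fin 3 → ℝ | h / 2 ≤ ξ 2 ∧ ξ 2 ≤ h} ⊆
      coneBlock ω h (4 * c * δ ^ 2) (4 * c * δ ^ 3) := by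
  rw [dilate_sub_dilate]
  rintro _ ⟨⟨_, ⟨_, ⟨x, hx, y, hy, rfl⟩, rfl⟩, rfl⟩, hslab⟩
  obtain ⟨A, B, C, hB, hC, hT⟩ := exists_Tmap_sub_eq_of_mem_momentBlock hω hδ hx hy
  have hscale {M D : ℝ} (hD : |D| ≤ 4 * M) : |c * D| ≤ 4 * c * M := by
    rw [abs_mul, abs_of_nonneg hc, mul_right_comm, mul_comm _ c]
    exact mul_le_mul_of_nonneg_left hD hc
  have hTc : Tmap (c • (x - y)) =
      (c * A) • coneU ω + (c * B) • coneV ω + (c * C) • coneW ω := by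
    rw [Tmap_smul, hT]; module
  simp only [hTc] at hslab ⊢
  exact mem_coneBlock_of_mem_slab (hscale hB) (hscale hC) hh hslab

/-- **(From the proof of Proposition 2.13.)** The slab-restricted image under `T` of the
difference set of a dilated canonical moment curve block lies in the neighborhood of a
canonical cone block in the frame `(u,v,w)` at the corresponding angle `ω`. -/
theorem canonical_block_to_cone_block :
    ∃ K : ℝ, 1 ≤ K ∧
    ∀ ρ : ℕ, 1 ≤ ρ → ∀ l : ℕ, l < ρ →
    ∀ ω : ℝ, ω ∈ Set.Icc (π/4) (π/2) →
    Real.cos ω = 2 * Real.sqrt 2 * ((l:ℝ)/ρ) / (2 + ((l:ℝ)/ρ)^2) →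
    Real.sin ω = (2 - ((l:ℝ)/ρ)^2) / (2 + ((l:ℝ)/ρ)^2) →
    ∀ c : ℝ, 1 ≤ c → ∀ r : ℝ, 0 < r → K * c * ((ρ:ℝ)⁻¹)^3 ≤ r⁻¹ / 4 →
    (Tmap '' (dilate c (canBlock ρ l) - dilate c (canBlock ρ l))) ∩
        {ξ : Fin 3 → ℝ | r⁻¹ / 2 ≤ ξ 2 ∧ ξ 2 ≤ r⁻¹} ⊆
      {ξ | ∃ A' B' C' : ℝ, r⁻¹ / 4 ≤ A' ∧ A' ≤ 2 * r⁻¹ ∧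
           |B'| ≤ K * c * ((ρ:ℝ)⁻¹)^2 ∧ |C'| ≤ K * c * ((ρ:ℝ)⁻¹)^3 ∧
           ξ = A' • ![Real.cos ω, Real.sin ω, 1] + B' • ![Real.sin ω, -Real.cos ω, 0]
               + C' • ![Real.cos ω, Real.sin ω, -1]} := by
  refine ⟨4, by norm_num, fun ρ hρ l _ ω _ hcos hsin c hc r _ hK => ?_⟩
  rw [canBlock_eq_momentBlock]
  exact canonical_block_to_cone_block_general ⟨hcos, hsin⟩
    (inv_le_one_of_one_le₀ (by exact_mod_cast hρ)) (zero_le_one.trans hc) hK
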